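/- Fix b ∈ ℝ and for each integer n ≥ 3 let F_n(x) = −2cos(2π/n) + 2x + n·x^{n−1} + 2cos(2π/n)(1−n)·x^n − (2−n)·x^{n+1}. Then lim_{n→∞} n·F_n(1 − b/n) = e^{−b}·(4π² + 2b + b² − 2b·e^b). -/

import Mathlib

open Real Filter

/-- `F_n(x) = −2cos(2π/n) + 2x + n·x^{n−1} + 2cos(2π/n)(1−n)·x^n − (2−n)·x^{n+1}` on `ℝ`. -/
noncomputable def F (n : ℕ) (x : ℝ) : ℝ :=
  -2 * Real.cos (2 * π / n) + 2 * x + (n : ℝ) * x ^ (n - 1)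
    + 2 * Real.cos (2 * π / n) * (1 - (n : ℝ)) * x ^ n
    - (2 - (n : ℝ)) * x ^ (n + 1)

/-!
Expanding `F_n` in powers of the small quantities `1 - x` and `1 - cos (2π / n)` shows that
`n · F_n(x)` is exactly a polynomial in `n (1 - x)`, `n² (1 - cos (2π / n))`,
`n (1 - cos (2π / n))`, `x` and `x ^ (n - 1)`. When `n (1 - x) → b` these converge to `b`, `2π²`,
`0`, `1` and `e^{-b}`, so no error terms have to be estimated.
-/

open scoped Topology

lemma one_sub_cos_eq_sq_mul_sinc_sq (x : ℝ) :
    1 - cos x = x ^ 2 / 2 * sinc (x / 2) ^ 2 := by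
  rcases eq_or_ne x 0 with rfl | hx
  · simp
  · have half_angle : sin (x / 2) ^ 2 = (1 - cos x) / 2 := by
      rw [sin_sq_eq_half_sub, mul_div_cancel₀ x two_ne_zero, sub_div]
    rw [sinc_of_ne_zero (div_ne_zero hx two_ne_zero), div_pow, half_angle]
    field

lemma tendsto_sq_mul_one_sub_cos_div_atTop (t : ℝ) :
    Tendsto (fun x : ℝ ↦ x ^ 2 * (1 - cos (t / x))) atTop (𝓝 (t ^ 2 / 2)) := by
  have sinc_tendsto : Tendsto (fun x : ℝ ↦ sinc (t / x / 2)) atTop (𝓝 1) := by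
    have arg_tendsto : Tendsto (fun x : ℝ ↦ t / x / 2) atTop (𝓝 0) := by
      simpa using (tendsto_id.const_div_atTop t).div_const 2
    exact (continuous_sinc.tendsto' 0 1 sinc_zero).comp arg_tendsto
  have lim : Tendsto (fun x : ℝ ↦ t ^ 2 / 2 * sinc (t / x / 2) ^ 2) atTop (𝓝 (t ^ 2 / 2)) := by
    simpa using (sinc_tendsto.pow 2).const_mul (t ^ 2 / 2)
  refine lim.congr' ?_
  filter_upwards [eventually_ne_atTop 0] with x hx
  rw [one_sub_cos_eq_sq_mul_sinc_sq]
  field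

lemma tendsto_one_add_pow_sub_exp_of_tendsto {g : ℕ → ℝ} {t : ℝ} (k : ℕ)
    (hg : Tendsto (fun n ↦ n * g n) atTop (𝓝 t)) :
    Tendsto (fun n ↦ (1 + g n) ^ (n - k)) atTop (𝓝 (exp t)) := by
  have base_tendsto : Tendsto (fun n ↦ 1 + g n) atTop (𝓝 1) := by
    simpa using (ProbabilityTheory.tendsto_zero_of_tendsto_mul_atTop hg).const_add 1
  have lim : Tendsto (fun n ↦ (1 + g n) ^ n * ((1 + g n) ^ k)⁻¹) atTop (𝓝 (exp t)) := by
    simpa using (tendsto_one_add_pow_exp_of_tendsto hg).mul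
      ((base_tendsto.pow k).inv₀ (pow_ne_zero k one_ne_zero))
  refine lim.congr' ?_
  filter_upwards [eventually_ge_atTop k, base_tendsto.eventually_ne one_ne_zero] with n hn hne
  exact (pow_sub₀ _ hne hn).symm

lemma natCast_mul_F_eq {n : ℕ} (hn : n ≠ 0) (x : ℝ) :
    n * F n x = 2 * (n * (1 - cos (2 * π / n))) - 2 * (n * (1 - x))
      + x ^ (n - 1) * ((n * (1 - x)) ^ 2 + 2 * (n * (1 - x)) * x
        + 2 * (n ^ 2 * (1 - cos (2 * π / n)) - n * (1 - cos (2 * π / n))) * x) := by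
  have pow_eq : x ^ n = x ^ (n - 1) * x := (pow_sub_one_mul hn x).symm
  rw [F, pow_succ x n, pow_eq]
  ring

theorem nF_tendsto_general {b : ℝ} {x : ℕ → ℝ}
    (hx : Tendsto (fun n ↦ n * (1 - x n)) atTop (𝓝 b)) :
    Tendsto (fun n : ℕ ↦ (n : ℝ) * F n (x n)) atTop
      (𝓝 (exp (-b) * (4 * π ^ 2 + 2 * b + b ^ 2 - 2 * b * exp b))) := by
  have x_tendsto : Tendsto x atTop (𝓝 1) := by
    simpa using (ProbabilityTheory.tendsto_zero_of_tendsto_mul_atTop hx).const_sub 1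
  have pow_tendsto : Tendsto (fun n ↦ x n ^ (n - 1)) atTop (𝓝 (exp (-b))) := by
    have hg : Tendsto (fun n ↦ n * (x n - 1)) atTop (𝓝 (-b)) := by
      simpa [← mul_neg] using hx.neg
    simpa using tendsto_one_add_pow_sub_exp_of_tendsto 1 hg
  have sq_mul_cos : Tendsto (fun n : ℕ ↦ (n : ℝ) ^ 2 * (1 - cos (2 * π / n))) atTop
      (𝓝 ((2 * π) ^ 2 / 2)) :=
    (tendsto_sq_mul_one_sub_cos_div_atTop (2 * π)).comp tendsto_natCast_atTop_atTop
  have mul_cos : Tendsto (fun n : ℕ ↦ (n : ℝ) * (1 - cos (2 * π / n))) atTop (𝓝 0) :=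
    ProbabilityTheory.tendsto_zero_of_tendsto_mul_atTop (sq_mul_cos.congr fun n ↦ by ring)
  have lim := ((mul_cos.const_mul 2).sub (hx.const_mul 2)).add (pow_tendsto.mul
    (((hx.pow 2).add ((hx.const_mul 2).mul x_tendsto)).add
      (((sq_mul_cos.sub mul_cos).const_mul 2).mul x_tendsto)))
  have limit_eq : 2 * 0 - 2 * b
      + exp (-b) * (b ^ 2 + 2 * b * 1 + 2 * ((2 * π) ^ 2 / 2 - 0) * 1)
      = exp (-b) * (4 * π ^ 2 + 2 * b + b ^ 2 - 2 * b * exp b) := by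
    have exp_mul : exp (-b) * exp b = 1 := by rw [← exp_add, neg_add_cancel, exp_zero]
    linear_combination 2 * b * exp_mul
  refine (limit_eq ▸ lim).congr' ?_
  filter_upwards [eventually_ne_atTop 0] with n hn
  exact (natCast_mul_F_eq hn (x n)).symm

/-- For fixed `b ∈ ℝ`, `n·F_n(1 − b/n) → e^{−b}·(4π² + 2b + b² − 2b·e^b)` as `n → ∞`. -/
theorem nF_tendsto (b : ℝ) :
    Tendsto (fun n : ℕ => (n : ℝ) * F n (1 - b / n)) atTop
      (nhds (Real.exp (-b) * (4 * π ^ 2 + 2 * b + b ^ 2 - 2 * b * Real.exp b))) := by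
  refine nF_tendsto_general (tendsto_const_nhds.congr' ?_)
  filter_upwards [eventually_ne_atTop 0] with n hn
  field
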